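/- If 𝔉 is a flip-flop family with respect to a continuous map f : X → X and a continuous function φ : K → ℝ (K compact), then there exists a nonempty compact forward-invariant set Ω ⊆ K such that the Birkhoff averages (1/n)∑_{j<n} φ(f^j(x)) converge to 0 uniformly on Ω. In particular there exists an f-invariant Borel probability measure μ supported in K with ∫ φ dμ = 0. -/

import Mathlib

open Filter Topology Set

variable {X : Type*} [MetricSpace X]

/-- Birkhoff sum of `φ` of length `n` along the orbit of `f`. -/
noncomputable def birkhoff (f : X → X) (φ : X → ℝ) (n : ℕ) (x : X) : ℝ :=
  ∑ i ∈ Finset.range n, φ (f^[i] x)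

/-- A flip-flop family for `f : X → X` and `φ : K → ℝ`: two disjoint families of compact
subsets of `K` with diameters bounded by `d₀`, separated in sign by `α` (FF1), with the
covering property (FF2) and uniform expansion `lam > 1` along segments (FF3). -/
structure FlipFlopFamily (f : X → X) (K : Set X) (φ : X → ℝ) where
  pos : Set (Set X)
  neg : Set (Set X)
  disj : Disjoint pos neg
  mem_compact : ∀ D ∈ pos ∪ neg, IsCompact D
  mem_subset : ∀ D ∈ pos ∪ neg, D ⊆ K
  mem_nonempty : ∀ D ∈ pos ∪ neg, D.Nonempty
  d₀ : ℝ
  diam_le : ∀ D ∈ pos ∪ neg, Metric.diam D ≤ d₀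
  α : ℝ
  α_pos : 0 < α
  ff1_pos : ∀ D ∈ pos, ∀ x ∈ D, α < φ x
  ff1_neg : ∀ D ∈ neg, ∀ x ∈ D, φ x < -α
  ff2_pos : ∀ D ∈ pos ∪ neg, ∃ Dp, IsCompact Dp ∧ Dp ⊆ D ∧ f '' Dp ∈ pos
  ff2_neg : ∀ D ∈ pos ∪ neg, ∃ Dm, IsCompact Dm ∧ Dm ⊆ D ∧ f '' Dm ∈ neg
  lam : ℝ
  lam_gt_one : 1 < lam
  ff3 : ∀ E : Set X, (∃ D ∈ pos ∪ neg, E ⊆ D) → f '' E ∈ pos ∪ neg →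
    ∀ x ∈ E, ∀ y ∈ E, lam * dist x y ≤ dist (f x) (f y)

/-- An `𝔉`-segment of length `T`: a sequence `D 0, …, D T` with `f '' (D i) = D (i+1)`,
each `D i` contained in a member of `𝔉`, and `D T` a member of `𝔉`. `D 0` is its entrance. -/
def IsSegment {f : X → X} {K : Set X} {φ : X → ℝ} (𝔉 : FlipFlopFamily f K φ)
    (D : ℕ → Set X) (T : ℕ) : Prop :=
  (∀ i < T, f '' D i = D (i + 1)) ∧ (∀ i ≤ T, ∃ D' ∈ 𝔉.pos ∪ 𝔉.neg, D i ⊆ D') ∧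
    D T ∈ 𝔉.pos ∪ 𝔉.neg

open MeasureTheory

/-! A flip-flop family lets one prescribe the signs of `φ` along an orbit, and by the expansion
(FF3) two orbits with the same signs up to time `j + k` are exponentially close in `k` at time `j`.
One wants to choose each sign opposite to the sum of the values of `φ` seen so far, but these values
also depend on future signs, and as `φ` is merely continuous the dependences need not add up to a
bounded error. So write `φ` along the orbit as a telescoping series of better and better
approximations, each looking finitely many signs ahead, and delay each term until those signs are
known. Delaying changes the sequence only by a uniform limit of sequences with bounded partial sums,
which does not affect whether its window means tend uniformly to `0`. The delayed sequence is
determined by the past and has the prescribed signs up to a fixed lag, so the feedback rule keeps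
its partial sums bounded. Closing up the orbit gives `Ω`, and an accumulation point of the empirical
measures on `Ω` gives `μ`. -/

section UniformMeanZero

variable {E : Type*} [NormedAddCommGroup E]

/-- The means of `w` over windows of length `n` tend to `0` as `n → ∞`, uniformly in the position
of the window: `w` is almost convergent to `0` in the sense of Lorentz. Means are written without
division, as sums bounded by `ε * n`. -/
def HasUniformMeanZero (w : ℕ → E) : Prop :=
  ∀ ε : ℝ, 0 < ε → ∃ N : ℕ, ∀ n ≥ N, ∀ m, ‖∑ j ∈ Finset.range n, w (m + j)‖ ≤ ε * n

namespace HasUniformMeanZero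

lemma add {v w : ℕ → E} (hv : HasUniformMeanZero v) (hw : HasUniformMeanZero w) :
    HasUniformMeanZero (v + w) := by
  intro ε hε
  obtain ⟨N₁, hN₁⟩ := hv (ε / 2) (half_pos hε)
  obtain ⟨N₂, hN₂⟩ := hw (ε / 2) (half_pos hε)
  refine ⟨max N₁ N₂, fun n hn m ↦ ?_⟩
  simp only [Pi.add_apply, Finset.sum_add_distrib]
  calc _ ≤ ε / 2 * n + ε / 2 * n :=
        norm_add_le_of_le (hN₁ n (le_of_max_le_left hn) m) (hN₂ n (le_of_max_le_right hn) m)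
    _ = ε * n := by ring

lemma of_norm_sum_range_le {w : ℕ → E} {C : ℝ} (hC : ∀ n, ‖∑ j ∈ Finset.range n, w j‖ ≤ C) :
    HasUniformMeanZero w := by
  intro ε hε
  obtain ⟨N, hN⟩ := exists_nat_ge (2 * C / ε)
  refine ⟨N, fun n hn m ↦ ?_⟩
  have window_eq : ∑ j ∈ Finset.range n, w (m + j)
      = ∑ j ∈ Finset.range (m + n), w j - ∑ j ∈ Finset.range m, w j := by
    rw [Finset.sum_range_add, add_sub_cancel_left]
  calc ‖∑ j ∈ Finset.range n, w (m + j)‖ ≤ C + C := by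
        rw [window_eq]
        exact norm_sub_le_of_le (hC _) (hC _)
    _ = ε * (2 * C / ε) := by field_simp; ring
    _ ≤ ε * n := by gcongr; exact hN.trans (mod_cast hn)

lemma sum {ι : Type*} {w : ι → ℕ → E} (s : Finset ι) (hw : ∀ i ∈ s, HasUniformMeanZero (w i)) :
    HasUniformMeanZero (∑ i ∈ s, w i) :=
  Finset.sum_induction w HasUniformMeanZero (fun _ _ ↦ add)
    (of_norm_sum_range_le (C := 0) (by simp)) hw

lemma of_tendstoUniformly {ι : Type*} {p : Filter ι} [p.NeBot] {W : ι → ℕ → E} {w : ℕ → E}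
    (hW : ∀ i, HasUniformMeanZero (W i)) (hlim : TendstoUniformly W w p) :
    HasUniformMeanZero w := by
  intro ε hε
  obtain ⟨i, hi⟩ := (Metric.tendstoUniformly_iff.1 hlim (ε / 2) (half_pos hε)).exists
  obtain ⟨N, hN⟩ := hW i (ε / 2) (half_pos hε)
  refine ⟨N, fun n hn m ↦ ?_⟩
  have error_le : ‖∑ j ∈ Finset.range n, (w (m + j) - W i (m + j))‖ ≤ ε / 2 * n :=
    (norm_sum_le_of_le _ fun j _ ↦ (dist_eq_norm (w (m + j)) _).symm.trans_le (hi _).le).trans_eq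
      (by simp [mul_comm])
  calc ‖∑ j ∈ Finset.range n, w (m + j)‖
      = ‖∑ j ∈ Finset.range n, (w (m + j) - W i (m + j)) + ∑ j ∈ Finset.range n, W i (m + j)‖ := by
        rw [Finset.sum_sub_distrib, sub_add_cancel]
    _ ≤ ε / 2 * n + ε / 2 * n := norm_add_le_of_le error_le (hN n hn m)
    _ = ε * n := by ring

lemma tendsto_average [NormedSpace ℝ E] {w : ℕ → E} (hw : HasUniformMeanZero w) :
    Tendsto (fun n : ℕ ↦ (n : ℝ)⁻¹ • ∑ j ∈ Finset.range n, w j) atTop (𝓝 0) := by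
  refine NormedAddGroup.tendsto_nhds_zero.2 fun ε hε ↦ ?_
  obtain ⟨N, hN⟩ := hw (ε / 2) (half_pos hε)
  filter_upwards [eventually_ge_atTop N, eventually_gt_atTop 0] with n hn hn₀
  have hn₀' : (0 : ℝ) < n := mod_cast hn₀
  have sum_le : ‖∑ j ∈ Finset.range n, w j‖ ≤ ε / 2 * n := by simpa using hN n hn 0
  rw [norm_smul, norm_inv, Real.norm_natCast, inv_mul_lt_iff₀ hn₀']
  nlinarith

end HasUniformMeanZero

/-- The sequence `c` shifted `l` steps to the right and padded with zeros. -/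
def delay (l : ℕ) (c : ℕ → E) (t : ℕ) : E :=
  if l ≤ t then c (t - l) else 0

lemma delay_add_right (l : ℕ) (c : ℕ → E) (t : ℕ) : delay l c (t + l) = c t := by
  simp [delay]

lemma norm_delay_le {c : ℕ → E} {B : ℝ} (hB : ∀ j, ‖c j‖ ≤ B) (l t : ℕ) : ‖delay l c t‖ ≤ B := by
  unfold delay
  split_ifs
  · exact hB _
  · simpa using (norm_nonneg _).trans (hB 0)

lemma sum_range_delay (l : ℕ) (c : ℕ → E) (n : ℕ) :
    ∑ t ∈ Finset.range n, delay l c t = ∑ t ∈ Finset.range (n - l), c t := by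
  induction n with
  | zero => simp
  | succ n ih =>
    rw [Finset.sum_range_succ, ih, delay]
    split_ifs with h
    · rw [Nat.sub_add_comm h, Finset.sum_range_succ]
    · rw [add_zero, Nat.sub_eq_zero_of_le (by omega), Nat.sub_eq_zero_of_le (by omega)]

lemma hasUniformMeanZero_sub_delay {c : ℕ → E} {B : ℝ} (hB : ∀ j, ‖c j‖ ≤ B) (l : ℕ) :
    HasUniformMeanZero (c - delay l c) := by
  refine .of_norm_sum_range_le (C := l * B) fun n ↦ ?_
  have hB₀ : 0 ≤ B := (norm_nonneg _).trans (hB 0)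
  simp only [Pi.sub_apply, Finset.sum_sub_distrib, sum_range_delay]
  rw [← Finset.sum_Ico_eq_sub _ (Nat.sub_le n l)]
  calc ‖∑ t ∈ Finset.Ico (n - l) n, c t‖ ≤ ((n - (n - l) : ℕ) : ℝ) * B :=
        (norm_sum_le_of_le _ fun t _ ↦ hB t).trans_eq (by simp)
    _ ≤ l * B := by gcongr; omega

lemma hasUniformMeanZero_tsum_sub_delay [CompleteSpace E] {d : ℕ → ℕ → E} {b : ℕ → ℝ}
    (hb : Summable b) (hd : ∀ i t, ‖d i t‖ ≤ b i) (l : ℕ → ℕ) :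
    HasUniformMeanZero fun t ↦ ∑' i, (d i t - delay (l i) (d i) t) := by
  refine .of_tendstoUniformly (fun n ↦ ?_) (tendstoUniformly_tsum_nat (hb.add hb) fun i t ↦
    norm_sub_le_of_le (hd i t) (norm_delay_le (hd i) (l i) t))
  have partial_sum : HasUniformMeanZero (∑ i ∈ Finset.range n, (d i - delay (l i) (d i))) :=
    .sum _ fun i _ ↦ hasUniformMeanZero_sub_delay (hd i) (l i)
  convert partial_sum with t
  simp

/-- The telescoping series `A 0 + ∑ i, (A (i + 1) - A i)` with each term delayed, so that a term
built from `A i` is read at least `l i` steps late. If `A i t` requires information up to time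
`t + l i`, the result at time `t` only requires information up to time `t`. -/
noncomputable def delayedTelescope (A : ℕ → ℕ → E) (l : ℕ → ℕ) (t : ℕ) : E :=
  delay (l 0) (A 0) t + ∑' i, delay (max (l i) (l (i + 1))) (A (i + 1) - A i) t

section DelayedTelescope

variable {A : ℕ → ℕ → E} {b : ℕ → ℝ} {S M : ℝ} {w : ℕ → E}

lemma norm_tsum_delay_increment_le (hb : HasSum b S) (hA : ∀ i t, ‖(A (i + 1) - A i) t‖ ≤ b i)
    (l : ℕ → ℕ) (t : ℕ) :
    ‖∑' i, delay (max (l i) (l (i + 1))) (A (i + 1) - A i) t‖ ≤ S :=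
  tsum_of_norm_bounded hb fun i ↦ norm_delay_le (hA i) _ t

lemma norm_delayedTelescope_le (hb : HasSum b S) (hA : ∀ i t, ‖(A (i + 1) - A i) t‖ ≤ b i)
    (hM : ∀ t, ‖A 0 t‖ ≤ M) (l : ℕ → ℕ) (t : ℕ) : ‖delayedTelescope A l t‖ ≤ M + S :=
  norm_add_le_of_le (norm_delay_le hM _ t) (norm_tsum_delay_increment_le hb hA l t)

lemma norm_delayedTelescope_sub_le (hb : HasSum b S) (hA : ∀ i t, ‖(A (i + 1) - A i) t‖ ≤ b i)
    (l : ℕ → ℕ) (t : ℕ) : ‖delayedTelescope A l (t + l 0) - A 0 t‖ ≤ S := by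
  rw [delayedTelescope, delay_add_right, add_sub_cancel_left]
  exact norm_tsum_delay_increment_le hb hA l _

lemma hasUniformMeanZero_sub_delayedTelescope [CompleteSpace E] (hb : Summable b)
    (hA : ∀ i t, ‖(A (i + 1) - A i) t‖ ≤ b i) (hM : ∀ t, ‖A 0 t‖ ≤ M)
    (hlim : ∀ t, Tendsto (fun i ↦ A i t) atTop (𝓝 (w t))) (l : ℕ → ℕ) :
    HasUniformMeanZero (w - delayedTelescope A l) := by
  have summable_increment (t : ℕ) : Summable fun i ↦ (A (i + 1) - A i) t :=
    .of_norm_bounded hb fun i ↦ hA i t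
  have summable_delay (t : ℕ) :
      Summable fun i ↦ delay (max (l i) (l (i + 1))) (A (i + 1) - A i) t :=
    .of_norm_bounded hb fun i ↦ norm_delay_le (hA i) _ t
  have telescope (t : ℕ) : ∑' i, (A (i + 1) - A i) t = w t - A 0 t := by
    refine ((summable_increment t).hasSum_iff_tendsto_nat.2 ?_).tsum_eq
    simpa only [Pi.sub_apply, Finset.sum_range_sub (fun i ↦ A i t)] using (hlim t).sub_const _
  convert (hasUniformMeanZero_sub_delay hM (l 0)).add
    (hasUniformMeanZero_tsum_sub_delay hb hA fun i ↦ max (l i) (l (i + 1))) using 1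
  ext t
  simp only [Pi.add_apply, (summable_increment t).tsum_sub (summable_delay t), telescope]
  simp only [Pi.sub_apply, delayedTelescope]
  abel

lemma dependsOn_delayedTelescope {α : Type*} {A : (ℕ → α) → ℕ → ℕ → E} {l : ℕ → ℕ}
    (hA : ∀ i t, DependsOn (fun σ ↦ A σ i t) (Iic (t + l i))) (t : ℕ) :
    DependsOn (fun σ ↦ delayedTelescope (A σ) l t) (Iic t) := by
  intro σ τ hστ
  have agree (i s : ℕ) (h : s + l i ≤ t) : A σ i s = A τ i s :=
    hA i s fun r hr ↦ hστ r (hr.trans h)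
  simp only [delayedTelescope, delay]
  congr 1
  · split_ifs with h
    · exact agree _ _ (by omega)
    · rfl
  · refine tsum_congr fun i ↦ ?_
    split_ifs with h
    · simp only [Pi.sub_apply]
      rw [agree _ _ (by omega), agree _ _ (by omega)]
    · rfl

end DelayedTelescope

end UniformMeanZero

section Feedback

lemma exists_eq_of_dependsOn_Iio {ι α : Type*} [Preorder ι] [WellFoundedLT ι] [Nonempty α]
    {F : ι → (ι → α) → α} (hF : ∀ t, DependsOn (F t) (Iio t)) : ∃ σ : ι → α, ∀ t, σ t = F t σ := by
  classical
  let extend (t : ι) (σ : ∀ s, s < t → α) (s : ι) : α :=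
    if h : s < t then σ s h else Classical.arbitrary α
  refine ⟨wellFounded_lt.fix fun t σ ↦ F t (extend t σ), fun t ↦ ?_⟩
  rw [WellFounded.fix_eq]
  exact hF t fun s hs ↦ dif_pos hs

lemma abs_sum_range_le_of_delayed_feedback {u : ℕ → ℝ} {p : ℕ} {B : ℝ} (hB : ∀ t, |u t| ≤ B)
    (nonpos : ∀ s, 0 < ∑ t ∈ Finset.range s, u t → u (s + p) ≤ 0)
    (nonneg : ∀ s, ∑ t ∈ Finset.range s, u t ≤ 0 → 0 ≤ u (s + p)) (n : ℕ) :
    |∑ t ∈ Finset.range n, u t| ≤ (p + 1 : ℕ) * B := by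
  have hB₀ : 0 ≤ B := (abs_nonneg _).trans (hB 0)
  have window_le (m k : ℕ) : |∑ t ∈ Finset.range k, u (m + t)| ≤ k * B :=
    (Finset.abs_sum_le_sum_abs _ _).trans <|
      (Finset.sum_le_card_nsmul _ _ B fun t _ ↦ hB (m + t)).trans_eq (by simp)
  induction n with
  | zero => simpa using mul_nonneg (Nat.cast_nonneg (p + 1)) hB₀
  | succ n ih =>
    rcases lt_or_ge n p with hn | hn
    · calc |∑ t ∈ Finset.range (n + 1), u t| ≤ (n + 1 : ℕ) * B := by simpa using window_le 0 (n + 1)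
        _ ≤ (p + 1 : ℕ) * B := by gcongr
    · obtain ⟨s, rfl⟩ := Nat.exists_eq_add_of_le' hn
      have last_step := Finset.sum_range_succ u (s + p)
      have last_window : ∑ t ∈ Finset.range (s + p + 1), u t
          = ∑ t ∈ Finset.range s, u t + ∑ t ∈ Finset.range (p + 1), u (s + t) :=
        Finset.sum_range_add u s (p + 1)
      obtain ⟨window_lower, window_upper⟩ := abs_le.1 (window_le s (p + 1))
      obtain ⟨ih_lower, ih_upper⟩ := abs_le.1 ih
      refine abs_le.2 ?_
      rcases lt_or_ge 0 (∑ t ∈ Finset.range s, u t) with hs | hs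
      · have := nonpos s hs
        constructor <;> linarith
      · have := nonneg s hs
        constructor <;> linarith

variable {α E : Type*} [NormedAddCommGroup E]

/-- The output `v σ j` at time `j` of a process with input `σ` is determined, up to any given error,
by the input up to time `j + k`, where the look-ahead `k` depends on the error only. -/
def UniformlyAlmostCausal (v : (ℕ → α) → ℕ → E) : Prop :=
  ∀ ε : ℝ, 0 < ε → ∃ k : ℕ, ∀ j σ τ, EqOn σ τ (Iic (j + k)) → ‖v σ j - v τ j‖ ≤ ε

lemma UniformlyAlmostCausal.exists_dependsOn_approx [Nonempty α] {v : (ℕ → α) → ℕ → E} {M ε : ℝ}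
    (hv : UniformlyAlmostCausal v) (hM : ∀ σ j, ‖v σ j‖ ≤ M) (hε : 0 < ε) :
    ∃ (k : ℕ) (a : (ℕ → α) → ℕ → E), (∀ j, DependsOn (fun σ ↦ a σ j) (Iic (j + k))) ∧
      (∀ σ j, ‖a σ j‖ ≤ M) ∧ ∀ σ j, ‖v σ j - a σ j‖ ≤ ε := by
  classical
  obtain ⟨k, hk⟩ := hv ε hε
  let truncate (σ : ℕ → α) (j : ℕ) : ℕ → α :=
    (Iic (j + k)).piecewise σ fun _ ↦ Classical.arbitrary α
  refine ⟨k, fun σ j ↦ v (truncate σ j) j, fun j σ τ hστ ↦ ?_, fun σ j ↦ hM _ _,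
    fun σ j ↦ hk j _ _ (piecewise_eqOn _ _ _).symm⟩
  have same_truncation : truncate σ j = truncate τ j :=
    funext fun i ↦ ite_congr rfl (hστ i) fun _ ↦ rfl
  simp only [same_truncation]

lemma UniformlyAlmostCausal.exists_causal [Nonempty α] [CompleteSpace E] {v : (ℕ → α) → ℕ → E}
    {M η : ℝ} (hv : UniformlyAlmostCausal v) (hM : ∀ σ j, ‖v σ j‖ ≤ M) (hη : 0 < η) :
    ∃ (p : ℕ) (u : (ℕ → α) → ℕ → E), (∀ t, DependsOn (fun σ ↦ u σ t) (Iic t)) ∧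
      (∀ σ t, ‖u σ t‖ ≤ M + η) ∧ (∀ σ t, ‖u σ (t + p) - v σ t‖ ≤ η) ∧
      ∀ σ, HasUniformMeanZero (v σ - u σ) := by
  let e (i : ℕ) : ℝ := η / 4 * (1 / 2) ^ i
  have he (i : ℕ) : 0 < e i := by positivity
  choose l A A_dependsOn A_le A_approx using fun i ↦ hv.exists_dependsOn_approx hM (he i)
  have increment_le (σ i t) : ‖(A (i + 1) σ - A i σ) t‖ ≤ e (i + 1) + e i := by
    rw [Pi.sub_apply, ← sub_sub_sub_cancel_left _ _ (v σ t), add_comm (e (i + 1))]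
    exact norm_sub_le_of_le (A_approx i σ t) (A_approx (i + 1) σ t)
  have hasSum_bound : HasSum (fun i ↦ e (i + 1) + e i) (3 / 4 * η) := by
    have geometric : (fun i ↦ e (i + 1) + e i) = fun i ↦ 3 / 8 * η * (1 / 2) ^ i := by
      funext i
      simp only [e]
      ring
    rw [geometric, show 3 / 4 * η = 3 / 8 * η * 2 by ring]
    exact hasSum_geometric_two.mul_left _
  have A_tendsto (σ t) : Tendsto (fun i ↦ A i σ t) atTop (𝓝 (v σ t)) := by
    have e_tendsto : Tendsto e atTop (𝓝 0) :=
      (summable_geometric_two.mul_left (η / 4)).tendsto_atTop_zero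
    refine tendsto_iff_norm_sub_tendsto_zero.2 (squeeze_zero (fun _ ↦ norm_nonneg _)
      (fun i ↦ ?_) e_tendsto)
    rw [norm_sub_rev]
    exact A_approx i σ t
  refine ⟨l 0, fun σ ↦ delayedTelescope (fun i ↦ A i σ) l,
    dependsOn_delayedTelescope A_dependsOn, fun σ t ↦ ?_, fun σ t ↦ ?_, fun σ ↦
    hasUniformMeanZero_sub_delayedTelescope hasSum_bound.summable (increment_le σ) (A_le 0 σ)
      (A_tendsto σ) l⟩
  · have := norm_delayedTelescope_le (A := fun i ↦ A i σ) hasSum_bound (increment_le σ)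
      (A_le 0 σ) l t
    linarith
  · have h_delayed := norm_delayedTelescope_sub_le (A := fun i ↦ A i σ) hasSum_bound
      (increment_le σ) l t
    have h_approx : ‖A 0 σ t - v σ t‖ ≤ η / 4 := by
      simpa [e, norm_sub_rev] using A_approx 0 σ t
    rw [← sub_add_sub_cancel _ (A 0 σ t)]
    linarith [norm_add_le_of_le h_delayed h_approx]

theorem UniformlyAlmostCausal.exists_hasUniformMeanZero {v : (ℕ → Bool) → ℕ → ℝ} {η M : ℝ}
    (hv : UniformlyAlmostCausal v) (hM : ∀ σ j, |v σ j| ≤ M) (hη : 0 < η)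
    (of_true : ∀ σ j, σ j = true → η < v σ j) (of_false : ∀ σ j, σ j = false → v σ j < -η) :
    ∃ σ, HasUniformMeanZero (v σ) := by
  obtain ⟨p, u, u_dependsOn, u_le, u_approx, v_sub_u⟩ := hv.exists_causal hM hη
  have rule_dependsOn (t : ℕ) :
      DependsOn (fun σ ↦ decide (∑ s ∈ Finset.range t, u σ s ≤ 0)) (Iio t) := by
    intro σ τ hστ
    have agree : ∑ s ∈ Finset.range t, u σ s = ∑ s ∈ Finset.range t, u τ s :=
      Finset.sum_congr rfl fun s hs ↦ u_dependsOn s fun r hr ↦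
        hστ r (lt_of_le_of_lt hr (Finset.mem_range.1 hs))
    simp only [agree]
  obtain ⟨σ, hσ⟩ := exists_eq_of_dependsOn_Iio rule_dependsOn
  have u_bounded := abs_sum_range_le_of_delayed_feedback (u := u σ) (p := p) (u_le σ)
    (fun s hs ↦ by
      have := of_false σ s (by simpa [hσ s] using hs)
      linarith [(abs_le.1 (u_approx σ s)).2])
    (fun s hs ↦ by
      have := of_true σ s (by simpa [hσ s] using hs)
      linarith [(abs_le.1 (u_approx σ s)).1])
  exact ⟨σ, by simpa using (v_sub_u σ).add (.of_norm_sum_range_le u_bounded)⟩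

end Feedback

lemma exists_forall_iterate_mem {Y : Type*} [TopologicalSpace Y] [T2Space Y] {g : Y → Y}
    (hg : Continuous g) {E : ℕ → Set Y} (hE : ∀ n, IsCompact (E n)) (hne : ∀ n, (E n).Nonempty)
    (hcover : ∀ n, E (n + 1) ⊆ g '' E n) : ∃ x, ∀ n, g^[n] x ∈ E n := by
  have finite_orbit (n : ℕ) : ∀ y ∈ E n, ∃ x, g^[n] x = y ∧ ∀ i ≤ n, g^[i] x ∈ E i := by
    induction n with
    | zero => exact fun y hy ↦ ⟨y, rfl, fun i hi ↦ by simpa [Nat.le_zero.1 hi] using hy⟩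
    | succ n ih =>
      intro y hy
      obtain ⟨z, hz, rfl⟩ := hcover n hy
      obtain ⟨x, rfl, hx⟩ := ih z hz
      refine ⟨x, Function.iterate_succ_apply' g n x, fun i hi ↦ ?_⟩
      rcases Nat.le_succ_iff.1 hi with hi | rfl
      · exact hx i hi
      · rwa [Function.iterate_succ_apply']
  obtain ⟨x, -, hx⟩ := (hE 0).inter_iInter_nonempty (fun i ↦ g^[i] ⁻¹' E i)
    (fun i ↦ (hE i).isClosed.preimage (hg.iterate i)) fun s ↦ by
      obtain ⟨y, hy⟩ := hne (s.sup id)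
      obtain ⟨x, -, hx⟩ := finite_orbit _ y hy
      exact ⟨x, hx 0 (Nat.zero_le _), mem_iInter₂.2 fun i hi ↦ hx i (Finset.le_sup (f := id) hi)⟩
  exact ⟨x, mem_iInter.1 hx⟩

namespace FlipFlopFamily

variable {f : X → X} {K : Set X} {φ : X → ℝ} (𝔉 : FlipFlopFamily f K φ)

/-- The members of `𝔉 = 𝔉⁺ ∪ 𝔉⁻`, as a type. -/
abbrev Member : Type _ := ↥(𝔉.pos ∪ 𝔉.neg)

/-- The half of the family with a given sign: `true` stands for `𝔉⁺` and `false` for `𝔉⁻`. -/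
def half (b : Bool) : Set (Set X) := bif b then 𝔉.pos else 𝔉.neg

lemma half_subset (b : Bool) : 𝔉.half b ⊆ 𝔉.pos ∪ 𝔉.neg := by
  cases b
  · exact subset_union_right
  · exact subset_union_left

lemma exists_branch (D : 𝔉.Member) (b : Bool) :
    ∃ E, IsCompact E ∧ E ⊆ D ∧ f '' E ∈ 𝔉.half b := by
  cases b
  · exact 𝔉.ff2_neg D D.2
  · exact 𝔉.ff2_pos D D.2

/-- A choice of the sets `D⁺` (for `b = true`) and `D⁻` (for `b = false`) of (FF2). -/
noncomputable def branch (D : 𝔉.Member) (b : Bool) : Set X := (𝔉.exists_branch D b).choose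

lemma isCompact_branch (D : 𝔉.Member) (b : Bool) : IsCompact (𝔉.branch D b) :=
  (𝔉.exists_branch D b).choose_spec.1

lemma branch_subset (D : 𝔉.Member) (b : Bool) : 𝔉.branch D b ⊆ D :=
  (𝔉.exists_branch D b).choose_spec.2.1

lemma image_branch_mem (D : 𝔉.Member) (b : Bool) : f '' 𝔉.branch D b ∈ 𝔉.half b :=
  (𝔉.exists_branch D b).choose_spec.2.2

/-- The sequence of members obtained from `D₀` by taking, at time `n`, the image of the branch
with sign `σ n`. -/
noncomputable def itinerary (D₀ : 𝔉.Member) (σ : ℕ → Bool) : ℕ → 𝔉.Member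
  | 0 => D₀
  | n + 1 => ⟨f '' 𝔉.branch (itinerary D₀ σ n) (σ n), 𝔉.half_subset _ (𝔉.image_branch_mem _ _)⟩

lemma itinerary_succ_mem_half (D₀ : 𝔉.Member) (σ : ℕ → Bool) (n : ℕ) :
    (𝔉.itinerary D₀ σ (n + 1) : Set X) ∈ 𝔉.half (σ n) :=
  𝔉.image_branch_mem _ _

lemma dependsOn_itinerary (D₀ : 𝔉.Member) (n : ℕ) :
    DependsOn (fun σ ↦ 𝔉.itinerary D₀ σ n) (Iio n) := by
  intro σ τ hστ
  induction n with
  | zero => rfl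
  | succ n ih =>
    have previous : 𝔉.itinerary D₀ σ n = 𝔉.itinerary D₀ τ n :=
      ih fun i hi ↦ hστ i (Nat.lt_succ_of_lt hi)
    simp only [itinerary, previous, hστ n n.lt_succ_self]

/-- The orbit of `x` runs through the branches selected by the sign sequence `σ`, starting in the
member `D₀`. -/
def Follows (D₀ : 𝔉.Member) (σ : ℕ → Bool) (x : X) : Prop :=
  ∀ n, f^[n] x ∈ 𝔉.branch (𝔉.itinerary D₀ σ n) (σ n)

lemma exists_follows (hf : Continuous f) (D₀ : 𝔉.Member) (σ : ℕ → Bool) :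
    ∃ x, 𝔉.Follows D₀ σ x := by
  refine exists_forall_iterate_mem hf (fun n ↦ 𝔉.isCompact_branch _ _) (fun n ↦ ?_)
    fun n ↦ 𝔉.branch_subset (𝔉.itinerary D₀ σ (n + 1)) _
  exact (𝔉.mem_nonempty _ (𝔉.itinerary D₀ σ (n + 1)).2).of_image

namespace Follows

variable {𝔉} {D₀ : 𝔉.Member} {σ τ : ℕ → Bool} {x y : X}

lemma mem_itinerary (hx : 𝔉.Follows D₀ σ x) (n : ℕ) : f^[n] x ∈ (𝔉.itinerary D₀ σ n : Set X) :=
  𝔉.branch_subset _ _ (hx n)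

lemma iterate_mem (hx : 𝔉.Follows D₀ σ x) (n : ℕ) : f^[n] x ∈ K :=
  𝔉.mem_subset _ (𝔉.itinerary D₀ σ n).2 (hx.mem_itinerary n)

lemma lt_of_eq_true (hx : 𝔉.Follows D₀ σ x) {n : ℕ} (hn : σ n = true) :
    𝔉.α < φ (f^[n + 1] x) :=
  𝔉.ff1_pos _ (by simpa [hn, half] using 𝔉.itinerary_succ_mem_half D₀ σ n) _
    (hx.mem_itinerary (n + 1))

lemma lt_of_eq_false (hx : 𝔉.Follows D₀ σ x) {n : ℕ} (hn : σ n = false) :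
    φ (f^[n + 1] x) < -𝔉.α :=
  𝔉.ff1_neg _ (by simpa [hn, half] using 𝔉.itinerary_succ_mem_half D₀ σ n) _
    (hx.mem_itinerary (n + 1))

lemma dist_le (hx : 𝔉.Follows D₀ σ x) (hy : 𝔉.Follows D₀ τ y) {n : ℕ} (hστ : EqOn σ τ (Iio n)) :
    dist (f^[n] x) (f^[n] y) ≤ 𝔉.d₀ := by
  have hD := (𝔉.itinerary D₀ σ n).2
  have same_member : 𝔉.itinerary D₀ σ n = 𝔉.itinerary D₀ τ n := 𝔉.dependsOn_itinerary D₀ n hστ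
  exact (Metric.dist_le_diam_of_mem (𝔉.mem_compact _ hD).isBounded (hx.mem_itinerary n)
    (same_member ▸ hy.mem_itinerary n)).trans (𝔉.diam_le _ hD)

lemma lam_mul_dist_le (hx : 𝔉.Follows D₀ σ x) (hy : 𝔉.Follows D₀ τ y) {n : ℕ}
    (hστ : EqOn σ τ (Iic n)) :
    𝔉.lam * dist (f^[n] x) (f^[n] y) ≤ dist (f^[n + 1] x) (f^[n + 1] y) := by
  have same_member : 𝔉.itinerary D₀ σ n = 𝔉.itinerary D₀ τ n :=
    𝔉.dependsOn_itinerary D₀ n (hστ.mono Iio_subset_Iic_self)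
  have hy_branch : f^[n] y ∈ 𝔉.branch (𝔉.itinerary D₀ σ n) (σ n) := by
    rw [same_member, hστ self_mem_Iic]
    exact hy n
  simp only [Function.iterate_succ_apply']
  exact 𝔉.ff3 _ ⟨_, (𝔉.itinerary D₀ σ n).2, 𝔉.branch_subset _ _⟩ (𝔉.itinerary D₀ σ (n + 1)).2
    _ (hx n) _ hy_branch

lemma lam_pow_mul_dist_le (hx : 𝔉.Follows D₀ σ x) (hy : 𝔉.Follows D₀ τ y) {j k : ℕ}
    (hστ : EqOn σ τ (Iio (j + k))) : 𝔉.lam ^ k * dist (f^[j] x) (f^[j] y) ≤ 𝔉.d₀ := by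
  have hlam : 0 ≤ 𝔉.lam := zero_le_one.trans 𝔉.lam_gt_one.le
  refine (geom_le (u := fun i ↦ dist (f^[j + i] x) (f^[j + i] y)) hlam k fun i hi ↦ ?_).trans
    (hx.dist_le hy hστ)
  exact hx.lam_mul_dist_le hy (hστ.mono (Iic_subset_Iio.2 (by omega)))

end Follows

lemma uniformlyAlmostCausal_of_follows (hK : IsCompact K) (hφ : ContinuousOn φ K)
    {D₀ : 𝔉.Member} {x : (ℕ → Bool) → X} (hx : ∀ σ, 𝔉.Follows D₀ σ (x σ)) :
    UniformlyAlmostCausal fun σ j ↦ φ (f^[j + 1] (x σ)) := by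
  intro ε hε
  obtain ⟨δ, hδ, φ_close⟩ :=
    Metric.uniformContinuousOn_iff_le.1 (hK.uniformContinuousOn_of_continuous hφ) ε hε
  obtain ⟨k, hk⟩ := pow_unbounded_of_one_lt (𝔉.d₀ / δ) 𝔉.lam_gt_one
  refine ⟨k, fun j σ τ hστ ↦ φ_close _ ((hx σ).iterate_mem _) _ ((hx τ).iterate_mem _) ?_⟩
  have expansion : 𝔉.lam ^ k * dist (f^[j + 1] (x σ)) (f^[j + 1] (x τ)) ≤ 𝔉.d₀ :=
    (hx σ).lam_pow_mul_dist_le (hx τ) (hστ.mono fun i (hi : i < j + 1 + k) ↦ mem_Iic.2 (by omega))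
  have hlam : 0 < 𝔉.lam ^ k := pow_pos (zero_lt_one.trans 𝔉.lam_gt_one) k
  exact le_of_mul_le_mul_left (expansion.trans ((div_lt_iff₀ hδ).1 hk).le) hlam

theorem exists_orbit_hasUniformMeanZero (hf : Continuous f) (hK : IsCompact K)
    (hφ : ContinuousOn φ K) (D₀ : 𝔉.Member) :
    ∃ x, (∀ n, f^[n] x ∈ K) ∧ HasUniformMeanZero fun n ↦ φ (f^[n] x) := by
  choose x hx using 𝔉.exists_follows hf D₀
  obtain ⟨M, hM⟩ := hK.exists_bound_of_continuousOn hφ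
  obtain ⟨σ, hσ⟩ := (𝔉.uniformlyAlmostCausal_of_follows hK hφ hx).exists_hasUniformMeanZero
    (fun σ j ↦ hM _ ((hx σ).iterate_mem (j + 1))) 𝔉.α_pos
    (fun σ _ ↦ (hx σ).lt_of_eq_true) (fun σ _ ↦ (hx σ).lt_of_eq_false)
  exact ⟨f (x σ), fun n ↦ (hx σ).iterate_mem (n + 1), hσ⟩

end FlipFlopFamily

section OrbitClosure

variable {Y : Type*} [TopologicalSpace Y] {g : Y → Y}

lemma mapsTo_closure_orbit (hg : Continuous g) (x : Y) :
    MapsTo g (closure (range fun n ↦ g^[n] x)) (closure (range fun n ↦ g^[n] x)) := by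
  refine MapsTo.closure ?_ hg
  rintro _ ⟨n, rfl⟩
  exact ⟨n + 1, Function.iterate_succ_apply' g n x⟩

lemma HasUniformMeanZero.birkhoffSum_le_on_closure_orbit {E : Type*} [NormedAddCommGroup E]
    {ψ : Y → E} {x : Y} (hg : Continuous g) (hψ : ContinuousOn ψ (closure (range fun n ↦ g^[n] x)))
    (hx : HasUniformMeanZero fun n ↦ ψ (g^[n] x)) {ε : ℝ} (hε : 0 < ε) :
    ∃ N : ℕ, ∀ n ≥ N, ∀ y ∈ closure (range fun n ↦ g^[n] x), ‖birkhoffSum g ψ n y‖ ≤ ε * n := by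
  obtain ⟨N, hN⟩ := hx ε hε
  refine ⟨N, fun n hn y hy ↦ ?_⟩
  have cont : ContinuousOn (birkhoffSum g ψ n) (closure (range fun n ↦ g^[n] x)) :=
    continuousOn_finsetSum _ fun i _ ↦
      hψ.comp (hg.iterate i).continuousOn ((mapsTo_closure_orbit hg x).iterate i)
  refine ContinuousWithinAt.closure_le hy ((cont.norm y hy).mono subset_closure)
    continuousWithinAt_const ?_
  rintro _ ⟨m, rfl⟩
  simpa only [birkhoffSum, ← Function.iterate_add_apply, add_comm] using hN n hn m

end OrbitClosure

section KrylovBogoliubov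

variable {Y : Type*} [MeasurableSpace Y]

/-- The uniform probability measure on the orbit segment `y, g y, …, g^[n] y`. -/
noncomputable def empiricalMeasure (g : Y → Y) (y : Y) (n : ℕ) : Measure Y :=
  ((n + 1 : ℕ) : ENNReal)⁻¹ • ∑ i ∈ Finset.range (n + 1), Measure.dirac (g^[i] y)

instance isProbabilityMeasure_empiricalMeasure (g : Y → Y) (y : Y) (n : ℕ) :
    IsProbabilityMeasure (empiricalMeasure g y n) where
  measure_univ := by
    simp only [empiricalMeasure, Measure.smul_apply, Measure.finsetSum_apply, measure_univ,
      Finset.sum_const, Finset.card_range, smul_eq_mul, nsmul_eq_mul, mul_one]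
    exact ENNReal.inv_mul_cancel (by simp) (by simp)

lemma integral_empiricalMeasure [MeasurableSingletonClass Y] {E : Type*} [NormedAddCommGroup E]
    [NormedSpace ℝ E] [CompleteSpace E] (g : Y → Y) (y : Y) (n : ℕ) (ψ : Y → E) :
    ∫ z, ψ z ∂(empiricalMeasure g y n) = birkhoffAverage ℝ g ψ (n + 1) y := by
  rw [empiricalMeasure, integral_smul_measure,
    integral_finsetSum_measure fun i _ ↦ integrable_dirac (by simp),
    ENNReal.toReal_inv, ENNReal.toReal_natCast]
  simp [birkhoffAverage, birkhoffSum]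

variable [TopologicalSpace Y] [BorelSpace Y] [T2Space Y] [CompactSpace Y]

lemma exists_tendsto_birkhoffAverage_integral (g : Y → Y) (y : Y) :
    ∃ (μ : ProbabilityMeasure Y) (U : Filter ℕ), U.NeBot ∧ U ≤ atTop ∧ ∀ ψ : Y → ℝ, Continuous ψ →
      Tendsto (birkhoffAverage ℝ g ψ · y) U (𝓝 (∫ z, ψ z ∂μ)) := by
  let P (n : ℕ) : ProbabilityMeasure Y := ⟨empiricalMeasure g y n, inferInstance⟩
  obtain ⟨μ, -, hμ⟩ := isCompact_univ.ultrafilter_le_nhds ((hyperfilter ℕ).map P) (by simp)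
  have P_tendsto : Tendsto P (hyperfilter ℕ) (𝓝 μ) := hμ
  refine ⟨μ, map (· + 1) (hyperfilter ℕ), inferInstance,
    (tendsto_add_atTop_nat 1).mono_left Nat.hyperfilter_le_atTop, fun ψ hψ ↦ ?_⟩
  have integral_tendsto := ProbabilityMeasure.tendsto_iff_forall_integral_tendsto.1 P_tendsto
    (BoundedContinuousFunction.mkOfCompact ⟨ψ, hψ⟩)
  exact tendsto_map'_iff.2 (integral_tendsto.congr fun n ↦ integral_empiricalMeasure g y n ψ)

theorem exists_invariant_measure_of_compactSpace [HasOuterApproxClosed Y] {g : Y → Y}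
    (hg : Continuous g) (y : Y) :
    ∃ μ : Measure Y, IsProbabilityMeasure μ ∧ μ.map g = μ ∧ ∀ (ψ : Y → ℝ) (a : ℝ), Continuous ψ →
      Tendsto (birkhoffAverage ℝ g ψ · y) atTop (𝓝 a) → ∫ z, ψ z ∂μ = a := by
  obtain ⟨μ, U, hU, hU_le, hμ⟩ := exists_tendsto_birkhoffAverage_integral g y
  refine ⟨μ, inferInstance, ?_, fun ψ a hψ ha ↦
    tendsto_nhds_unique (hμ ψ hψ) (ha.mono_left hU_le)⟩
  have : IsProbabilityMeasure ((μ : Measure Y).map g) :=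
    Measure.isProbabilityMeasure_map hg.aemeasurable
  refine ext_of_forall_integral_eq_of_IsFiniteMeasure fun ψ ↦ ?_
  rw [integral_map hg.aemeasurable ψ.continuous.aestronglyMeasurable]
  have average_comp (n : ℕ) : birkhoffAverage ℝ g (ψ ∘ g) n y = birkhoffAverage ℝ g ψ n (g y) := by
    simp only [birkhoffAverage, birkhoffSum, Function.comp_apply, ← Function.iterate_succ_apply',
      Function.iterate_succ_apply]
  have diff_tendsto := (hμ (ψ ∘ g) (ψ.continuous.comp hg)).sub (hμ ψ ψ.continuous)
  simp only [average_comp] at diff_tendsto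
  exact sub_eq_zero.1 (tendsto_nhds_unique diff_tendsto
    ((tendsto_birkhoffAverage_apply_sub_birkhoffAverage' ℝ ψ.isBounded_range g y).mono_left hU_le))

end KrylovBogoliubov

theorem exists_invariant_measure_of_mapsTo [MeasurableSpace X] [BorelSpace X] {f : X → X}
    (hf : Continuous f) {Ω : Set X} (hΩ : IsCompact Ω) (hmaps : MapsTo f Ω Ω) {x : X} (hx : x ∈ Ω) :
    ∃ μ : Measure X, IsProbabilityMeasure μ ∧ μ.map f = μ ∧ μ Ωᶜ = 0 ∧
      ∀ (ψ : X → ℝ) (a : ℝ), ContinuousOn ψ Ω →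
        Tendsto (birkhoffAverage ℝ f ψ · x) atTop (𝓝 a) → ∫ z, ψ z ∂μ = a := by
  have : CompactSpace Ω := isCompact_iff_compactSpace.1 hΩ
  have hg : Continuous (hmaps.restrict f Ω Ω) := hf.continuousOn.mapsToRestrict hmaps
  have hval : MeasurableEmbedding ((↑) : Ω → X) := .subtype_coe hΩ.measurableSet
  obtain ⟨μ, hμ, invariant, integral_eq⟩ := exists_invariant_measure_of_compactSpace hg ⟨x, hx⟩
  refine ⟨μ.map (↑), Measure.isProbabilityMeasure_map hval.measurable.aemeasurable, ?_, ?_,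
    fun ψ a hψ ha ↦ ?_⟩
  · calc (μ.map (↑)).map f = (μ.map (hmaps.restrict f Ω Ω)).map (↑) := by
          rw [Measure.map_map hf.measurable hval.measurable,
            Measure.map_map hval.measurable hg.measurable]
          rfl
      _ = μ.map (↑) := by rw [invariant]
  · rw [hval.map_apply]
    simp
  · rw [hval.integral_map]
    refine integral_eq (Ω.domRestrict ψ) a hψ.domRestrict (ha.congr fun n ↦ ?_)
    simp [birkhoffAverage, birkhoffSum, hmaps.coe_iterate_restrict]

/-- Abstract criterion for zero averages (weak form, without entropy): a flip-flop family
yields a nonempty compact forward-invariant set `Ω ⊆ K` on which the Birkhoff averages of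
`φ` converge uniformly to `0`; in particular there is an `f`-invariant Borel probability
measure supported in `K` with `∫ φ dμ = 0`. -/
theorem flipFlop_zero_average
    {X : Type*} [MetricSpace X] [MeasurableSpace X] [BorelSpace X]
    {f : X → X} {K : Set X} {φ : X → ℝ}
    (hf : Continuous f) (hK : IsCompact K) (hφ : ContinuousOn φ K)
    (𝔉 : FlipFlopFamily f K φ) (hne : (𝔉.pos ∪ 𝔉.neg).Nonempty) :
    (∃ Ω : Set X, Ω.Nonempty ∧ IsCompact Ω ∧ Ω ⊆ K ∧ Set.MapsTo f Ω Ω ∧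
      ∀ ε : ℝ, 0 < ε → ∃ N : ℕ, ∀ n ≥ N, ∀ x ∈ Ω, |birkhoff f φ n x| ≤ ε * n) ∧
    ∃ μ : Measure X, IsProbabilityMeasure μ ∧ μ.map f = μ ∧ μ Kᶜ = 0 ∧
      ∫ x, φ x ∂μ = 0 := by
  obtain ⟨D₀, hD₀⟩ := hne
  obtain ⟨x, hxK, hx⟩ := 𝔉.exists_orbit_hasUniformMeanZero hf hK hφ ⟨D₀, hD₀⟩
  let Ω : Set X := closure (range fun n ↦ f^[n] x)
  have hxΩ : x ∈ Ω := subset_closure ⟨0, rfl⟩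
  have hΩK : Ω ⊆ K := closure_minimal (range_subset_iff.2 hxK) hK.isClosed
  have hΩ : IsCompact Ω := hK.of_isClosed_subset isClosed_closure hΩK
  have hmaps : MapsTo f Ω Ω := mapsTo_closure_orbit hf x
  refine ⟨⟨Ω, ⟨x, hxΩ⟩, hΩ, hΩK, hmaps, fun ε hε ↦
    hx.birkhoffSum_le_on_closure_orbit hf (hφ.mono hΩK) hε⟩, ?_⟩
  obtain ⟨μ, hμ, invariant, supported, integral_eq⟩ :=
    exists_invariant_measure_of_mapsTo hf hΩ hmaps hxΩ
  exact ⟨μ, hμ, invariant, measure_mono_null (compl_subset_compl.2 hΩK) supported,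
    integral_eq φ 0 (hφ.mono hΩK) hx.tendsto_average⟩
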